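/- There is no real 14×94 matrix S of rank 6 whose rows are indexed by the vertices 0,1,…,13 and whose columns are indexed by the 94 facets of the abstract prismatoid #1963 of Criado and Santos (listed in the context), such that S_{ij} = 0 whenever vertex i belongs to facet j and S_{ij} > 0 whenever vertex i does not belong to facet j. Consequently, the prismatoid #1963 is not realizable as a 5-dimensional polytope. -/

import Mathlib

open Matrix

/-- The 94 facets (as vertex sets in `Fin 14`) of the abstract prismatoid #1963 of
Criado and Santos. -/
def prismatoidFacets : List (Finset (Fin 14)) := [
    {0, 1, 2, 3, 4, 5, 6},
    {7, 8, 9, 10, 11, 12, 13},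
    {0, 1, 2, 6, 10},
    {0, 1, 4, 7, 11},
    {0, 2, 3, 8, 10},
    {1, 2, 6, 9, 13},
    {1, 4, 7, 8, 11},
    {2, 4, 7, 9, 10},
    {2, 5, 8, 9, 10},
    {5, 7, 8, 10, 11},
    {0, 1, 2, 3, 10},
    {0, 2, 4, 7, 11},
    {1, 2, 3, 8, 10},
    {1, 2, 5, 9, 13},
    {2, 4, 7, 8, 11},
    {1, 2, 7, 9, 12},
    {2, 5, 8, 9, 11},
    {6, 7, 8, 11, 12},
    {0, 1, 3, 4, 11},
    {0, 1, 3, 7, 11},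
    {0, 2, 3, 8, 11},
    {1, 2, 5, 9, 12},
    {2, 4, 7, 8, 10},
    {2, 5, 7, 9, 12},
    {2, 6, 8, 9, 11},
    {3, 7, 8, 12, 13},
    {0, 2, 3, 4, 11},
    {0, 1, 4, 7, 12},
    {0, 2, 6, 8, 11},
    {0, 1, 5, 9, 12},
    {2, 5, 7, 8, 11},
    {2, 5, 7, 9, 10},
    {1, 3, 7, 9, 13},
    {5, 7, 9, 10, 11},
    {1, 2, 3, 4, 11},
    {0, 2, 4, 7, 12},
    {1, 2, 3, 8, 11},
    {0, 1, 3, 9, 12},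
    {2, 5, 7, 8, 10},
    {0, 5, 7, 9, 12},
    {1, 4, 7, 9, 13},
    {6, 7, 9, 11, 12},
    {0, 1, 4, 5, 12},
    {0, 2, 5, 7, 12},
    {1, 2, 4, 8, 11},
    {0, 1, 5, 9, 13},
    {1, 3, 7, 8, 11},
    {0, 5, 7, 9, 11},
    {1, 6, 8, 9, 13},
    {4, 7, 8, 9, 10},
    {0, 2, 4, 5, 12},
    {0, 2, 5, 7, 11},
    {1, 2, 4, 8, 10},
    {0, 2, 5, 9, 13},
    {0, 3, 7, 8, 11},
    {0, 6, 7, 9, 11},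
    {0, 6, 8, 9, 13},
    {5, 8, 9, 10, 11},
    {1, 2, 4, 5, 12},
    {1, 2, 4, 7, 12},
    {0, 1, 6, 8, 13},
    {0, 2, 5, 9, 11},
    {0, 6, 7, 8, 11},
    {0, 6, 7, 9, 12},
    {0, 6, 8, 9, 12},
    {6, 8, 9, 11, 12},
    {0, 1, 5, 6, 13},
    {0, 1, 3, 7, 12},
    {0, 1, 3, 8, 13},
    {0, 2, 6, 9, 13},
    {0, 3, 7, 8, 12},
    {1, 3, 7, 9, 12},
    {0, 3, 8, 9, 12},
    {3, 7, 9, 12, 13},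
    {0, 2, 5, 6, 13},
    {0, 1, 6, 8, 10},
    {1, 2, 6, 9, 10},
    {0, 2, 6, 9, 11},
    {0, 6, 7, 8, 12},
    {1, 6, 8, 9, 10},
    {1, 4, 8, 9, 13},
    {4, 7, 8, 9, 13},
    {1, 2, 5, 6, 13},
    {0, 2, 6, 8, 10},
    {1, 2, 4, 9, 10},
    {0, 1, 3, 9, 13},
    {1, 3, 7, 8, 13},
    {1, 4, 8, 9, 10},
    {0, 3, 8, 9, 13},
    {3, 8, 9, 12, 13},
    {0, 1, 3, 8, 10},
    {1, 2, 4, 7, 9},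
    {1, 4, 7, 8, 13},
    {2, 6, 8, 9, 10}
  ]

/-- The facet indexed by `j : Fin 94`. -/
def facet1963 (j : Fin 94) : Finset (Fin 14) :=
  prismatoidFacets.get (Fin.cast (by rfl) j)

/-!
Rank-factor the slack matrix as `S = V * W` and consider the `6 × 6` minors of `V`. Replacing a
vertex `x` by a vertex `y` in a minor whose other five vertices lie on a facet `j` multiplies it by
`S y j / S x j`, so the sign is preserved whenever neither `x` nor `y` is on `j`. Starting from the
nonzero minor `[1 4 0 2 3 11]`, such exchanges show that the minors `[a b 0 2 3 11]` with
`(a, b) = (1, 4), (5, 7), (1, 5), (7, 4), (7, 1), (5, 4)` all have the same nonzero sign. This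
contradicts the three-term Grassmann–Plücker relation among these six minors.
-/

section Minors

variable {α β ι R : Type*} [Fintype ι] [DecidableEq ι] [CommRing R]

/-- The maximal minor (Grassmann–Plücker bracket) of `V` on the rows selected by the tuple `r`;
a repeated entry of `r` repeats the row, so that the minor is alternating in `r`. -/
def rowMinor (V : Matrix α ι R) (r : ι → α) : R :=
  (V.submatrix r id).det

lemma cramer_transpose_submatrix_apply_row (V : Matrix α ι R) (r : ι → α) (p : ι) (y : α) :
    cramer (V.submatrix r id)ᵀ (V y) p = rowMinor V (Function.update r p y) := by
  rw [cramer_transpose_apply, rowMinor]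
  congr 1
  ext q k
  obtain rfl | hq := eq_or_ne q p <;> simp [*]

lemma rowMinor_mul_map_row_eq_sum (V : Matrix α ι R) (φ : (ι → R) →ₗ[R] R) (r : ι → α) (y : α) :
    rowMinor V r * φ (V y) = ∑ p, rowMinor V (Function.update r p y) * φ (V (r p)) := by
  have cramer_rule :
      ∑ p, rowMinor V (Function.update r p y) • V (r p) = rowMinor V r • V y := by
    have := mulVec_cramer (V.submatrix r id)ᵀ (V y)
    rw [mulVec_eq_sum, det_transpose, transpose_transpose] at this
    simp only [cramer_transpose_submatrix_apply_row, op_smul_eq_smul] at this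
    exact this
  simpa only [map_smul, map_sum, smul_eq_mul] using congrArg φ cramer_rule.symm

lemma rowMinor_mul_mul_apply_eq_sum (V : Matrix α ι R) (W : Matrix ι β R) (r : ι → α) (y : α)
    (j : β) :
    rowMinor V r * (V * W) y j =
      ∑ p, rowMinor V (Function.update r p y) * (V * W) (r p) j :=
  rowMinor_mul_map_row_eq_sum V ((LinearMap.proj j).comp W.vecMulLinear) r y

lemma rowMinor_mul_rowMinor_update_eq_sum (V : Matrix α ι R) (r s : ι → α) (i : ι) (y : α) :
    rowMinor V r * rowMinor V (Function.update s i y) =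
      ∑ p, rowMinor V (Function.update r p y) * rowMinor V (Function.update s i (r p)) := by
  simpa only [LinearMap.comp_apply, LinearMap.proj_apply, cramer_transpose_submatrix_apply_row]
    using rowMinor_mul_map_row_eq_sum V
      ((LinearMap.proj i).comp (cramer (V.submatrix s id)ᵀ)) r y

lemma rowMinor_eq_zero_of_eq (V : Matrix α ι R) {r : ι → α} {p q : ι} (hpq : p ≠ q)
    (h : r p = r q) : rowMinor V r = 0 :=
  det_zero_of_row_eq hpq (congrArg V h)

lemma rowMinor_comp_swap (V : Matrix α ι R) (r : ι → α) {p q : ι} (hpq : p ≠ q) :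
    rowMinor V (r ∘ Equiv.swap p q) = -rowMinor V r :=
  detRowAlternating.map_swap (fun i => V (r i)) hpq

lemma rowMinor_vecCons_swap {n : ℕ} (V : Matrix α (Fin (n + 2)) R) (s : Fin n → α) (a b : α) :
    rowMinor V (vecCons b (vecCons a s)) = -rowMinor V (vecCons a (vecCons b s)) := by
  rw [← rowMinor_comp_swap V _ (zero_ne_one (α := Fin (n + 2)))]
  congr 1
  refine funext (Fin.cases ?_ (Fin.cases ?_ fun q => ?_))
  · simp
  · simp
  · have : q.succ.succ ≠ 1 := by simp [Fin.ext_iff]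
    simp [Equiv.swap_apply_of_ne_of_ne, this]

lemma rowMinor_grassmann_pluecker {n : ℕ} (V : Matrix α (Fin (n + 2)) R) (s : Fin n → α)
    (a b c d : α) :
    rowMinor V (vecCons a (vecCons b s)) * rowMinor V (vecCons c (vecCons d s)) +
      rowMinor V (vecCons a (vecCons c s)) * rowMinor V (vecCons d (vecCons b s)) +
      rowMinor V (vecCons d (vecCons a s)) * rowMinor V (vecCons c (vecCons b s)) = 0 := by
  have update_zero (x y z : α) :
      Function.update (vecCons x (vecCons y s)) 0 z = vecCons z (vecCons y s) :=
    Fin.update_cons_zero ..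
  have update_one (x y z : α) :
      Function.update (vecCons x (vecCons y s)) 1 z = vecCons x (vecCons z s) :=
    (Fin.cons_update (α := fun _ => α) x (vecCons y s) 0 z).symm.trans
      (congrArg (vecCons x) (Fin.update_cons_zero (α := fun _ => α) y s z))
  have repeated_row (q : Fin n) : rowMinor V (vecCons d (vecCons (s q) s)) = 0 :=
    rowMinor_eq_zero_of_eq V (p := 1) (q := q.succ.succ) (by simp [Fin.ext_iff]) rfl
  have exchange := rowMinor_mul_rowMinor_update_eq_sum V (vecCons a (vecCons b s))
    (vecCons d (vecCons a s)) 1 c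
  simp only [Fin.sum_univ_succ, Fin.succ_zero_eq_one, cons_val_zero, cons_val_succ,
    update_zero, update_one, repeated_row, mul_zero, Finset.sum_const_zero, add_zero] at exchange
  rw [rowMinor_vecCons_swap V s d c]
  linear_combination -exchange

end Minors

/-- The zero and sign pattern of a slack matrix of a polytope whose facets have the vertex sets
`F j`; the rank condition on slack matrices is kept separate. -/
def IsSlackPattern {α β K : Type*} [Zero K] [LT K] (F : β → Finset α) (S : Matrix α β K) : Prop :=
  ∀ i j, (i ∈ F j → S i j = 0) ∧ (i ∉ F j → 0 < S i j)

/-- The tuple `r'` arises from `r` by replacing one vertex off a facet `F j` containing all the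
others by another vertex off `F j`: the relation under which chirotopes of slack matrices are
invariant. -/
def FacetExchange {α β ι : Type*} (F : β → Finset α) (r r' : ι → α) : Prop :=
  ∃ p j, (∀ q, q ≠ p → r q ∈ F j ∧ r' q = r q) ∧ r p ∉ F j ∧ r' p ∉ F j

section Chirotope

variable {α β ι K : Type*} [Fintype ι] [CommRing K] [LinearOrder K] [IsStrictOrderedRing K]

/-- The chirotope of the row configuration of `V`: the orientation of each tuple of rows, with
value `0` for dependent rows. -/
def chirotope [DecidableEq ι] (V : Matrix α ι K) (r : ι → α) : SignType :=
  SignType.sign (rowMinor V r)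

lemma chirotope_grassmann_pluecker {n : ℕ} (V : Matrix α (Fin (n + 2)) K) (s : Fin n → α)
    (a b c d : α)
    (hacdb : 0 ≤ chirotope V (vecCons a (vecCons c s)) * chirotope V (vecCons d (vecCons b s)))
    (hdacb : 0 ≤ chirotope V (vecCons d (vecCons a s)) * chirotope V (vecCons c (vecCons b s))) :
    chirotope V (vecCons a (vecCons b s)) * chirotope V (vecCons c (vecCons d s)) ≤ 0 := by
  simp only [chirotope, ← sign_mul, sign_nonneg_iff, sign_nonpos_iff] at hacdb hdacb ⊢
  linarith [rowMinor_grassmann_pluecker V s a b c d]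

variable [DecidableEq ι] {F : β → Finset α} {V : Matrix α ι K} {W : Matrix ι β K}

lemma FacetExchange.chirotope_eq {r r' : ι → α} (h : FacetExchange F r r')
    (hVW : IsSlackPattern F (V * W)) : chirotope V r = chirotope V r' := by
  obtain ⟨p, j, hne, hp, hp'⟩ := h
  have update_eq : Function.update r p (r' p) = r' := by
    rw [Function.update_eq_iff]
    exact ⟨rfl, fun q hq => (hne q hq).2.symm⟩
  have exchange : rowMinor V r * (V * W) (r' p) j = rowMinor V r' * (V * W) (r p) j := by
    rw [rowMinor_mul_mul_apply_eq_sum, Finset.sum_eq_single p, update_eq]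
    · intro q _ hq
      rw [(hVW (r q) j).1 (hne q hq).1, mul_zero]
    · simp
  simpa [sign_mul, sign_pos ((hVW _ j).2 hp), sign_pos ((hVW _ j).2 hp'), chirotope]
    using congrArg SignType.sign exchange

lemma chirotope_eq_of_reflTransGen_facetExchange {r r' : ι → α}
    (h : Relation.ReflTransGen (FacetExchange F) r r') (hVW : IsSlackPattern F (V * W)) :
    chirotope V r = chirotope V r' := by
  induction h with
  | refl => rfl
  | tail _ step ih => exact ih.trans (step.chirotope_eq hVW)

lemma chirotope_ne_zero_of_triangular [LinearOrder ι] (hVW : IsSlackPattern F (V * W))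
    {r : ι → α} (f : ι → β) (hlower : ∀ a b, b < a → r a ∈ F (f b))
    (hdiag : ∀ a, r a ∉ F (f a)) : chirotope V r ≠ 0 := by
  have minor_mul :
      rowMinor V r * (W.submatrix id f).det = ∏ a, (V * W) (r a) (f a) := by
    rw [rowMinor, ← det_mul, ← submatrix_mul _ _ _ _ _ Function.bijective_id]
    exact det_of_isUpperTriangular fun a b hba => (hVW _ _).1 (hlower a b hba)
  have prod_pos : 0 < ∏ a, (V * W) (r a) (f a) :=
    Finset.prod_pos fun a _ => (hVW _ _).2 (hdiag a)
  rw [chirotope, sign_ne_zero]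
  exact left_ne_zero_of_mul (minor_mul ▸ prod_pos.ne')

end Chirotope

lemma exists_rank_factorization {m n K : Type*} [Fintype n] [Field K] {A : Matrix m n K} {k : ℕ}
    (hA : A.rank = k) : ∃ (V : Matrix m (Fin k) K) (W : Matrix (Fin k) n K), A = V * W := by
  classical
  let B := Module.finBasisOfFinrankEq K (LinearMap.range A.mulVecLin) hA
  let column (j : n) : LinearMap.range A.mulVecLin := ⟨A.col j, Pi.single j 1, by simp⟩
  refine ⟨of fun i l => (B l : m → K) i, of fun l j => B.repr (column j) l, ?_⟩
  ext i j
  calc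
    A i j = ((∑ l, B.repr (column j) l • B l :) : m → K) i := by rw [B.sum_repr]; rfl
    _ = _ := by
      simp only [Submodule.coe_sum, Submodule.coe_smul, Finset.sum_apply, Pi.smul_apply,
        smul_eq_mul, mul_apply, of_apply, mul_comm]

section Prismatoid1963

open Relation

/-- The six vertices whose bracket is nonzero by triangularity, from which all exchange sequences
start. -/
def baseTuple : Fin 6 → Fin 14 :=
  ![1, 4, 0, 2, 3, 11]

-- The exchange sequences below were found by a breadth-first search.
lemma reflTransGen_baseTuple_5_4 :
    ReflTransGen (FacetExchange facet1963) baseTuple ![5, 4, 0, 2, 3, 11] :=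
  .single ⟨0, 26, by decide⟩

lemma reflTransGen_baseTuple_7_4 :
    ReflTransGen (FacetExchange facet1963) baseTuple ![7, 4, 0, 2, 3, 11] :=
  .single ⟨0, 26, by decide⟩

lemma reflTransGen_baseTuple_1_5 :
    ReflTransGen (FacetExchange facet1963) baseTuple ![1, 5, 0, 2, 3, 11] :=
  calc ReflTransGen (FacetExchange facet1963) baseTuple ![1, 4, 0, 2, 3, 10] :=
        .single ⟨5, 0, by decide⟩
    FacetExchange facet1963 _ ![1, 5, 0, 2, 3, 10] := ⟨1, 10, by decide⟩
    FacetExchange facet1963 _ ![1, 5, 0, 2, 3, 11] := ⟨5, 0, by decide⟩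

lemma reflTransGen_baseTuple_5_6 :
    ReflTransGen (FacetExchange facet1963) baseTuple ![5, 6, 0, 2, 9, 11] :=
  calc ReflTransGen (FacetExchange facet1963) baseTuple ![8, 4, 0, 2, 3, 11] :=
        .single ⟨0, 26, by decide⟩
    FacetExchange facet1963 _ ![8, 6, 0, 2, 3, 11] := ⟨1, 20, by decide⟩
    FacetExchange facet1963 _ ![8, 6, 0, 2, 9, 11] := ⟨4, 28, by decide⟩
    FacetExchange facet1963 _ ![5, 6, 0, 2, 9, 11] := ⟨0, 77, by decide⟩

lemma reflTransGen_baseTuple_5_7 :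
    ReflTransGen (FacetExchange facet1963) baseTuple ![5, 7, 0, 2, 3, 11] :=
  calc ReflTransGen (FacetExchange facet1963) baseTuple ![5, 6, 0, 2, 9, 11] :=
        reflTransGen_baseTuple_5_6
    FacetExchange facet1963 _ ![5, 7, 0, 2, 9, 11] := ⟨1, 61, by decide⟩
    FacetExchange facet1963 _ ![5, 7, 0, 2, 3, 11] := ⟨4, 51, by decide⟩

lemma reflTransGen_baseTuple_7_1 :
    ReflTransGen (FacetExchange facet1963) baseTuple ![7, 1, 0, 2, 3, 11] :=
  calc ReflTransGen (FacetExchange facet1963) baseTuple ![5, 6, 0, 2, 9, 11] :=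
        reflTransGen_baseTuple_5_6
    FacetExchange facet1963 _ ![7, 6, 0, 2, 9, 11] := ⟨0, 77, by decide⟩
    FacetExchange facet1963 _ ![7, 6, 0, 8, 9, 11] := ⟨3, 55, by decide⟩
    FacetExchange facet1963 _ ![7, 6, 0, 8, 3, 11] := ⟨4, 62, by decide⟩
    FacetExchange facet1963 _ ![7, 1, 0, 8, 3, 11] := ⟨1, 54, by decide⟩
    FacetExchange facet1963 _ ![7, 1, 0, 2, 3, 11] := ⟨3, 19, by decide⟩

theorem not_isSlackPattern_facet1963_mul {K : Type*} [CommRing K] [LinearOrder K]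
    [IsStrictOrderedRing K] (V : Matrix (Fin 14) (Fin 6) K) (W : Matrix (Fin 6) (Fin 94) K) :
    ¬ IsSlackPattern facet1963 (V * W) := by
  intro hVW
  have base_ne_zero : chirotope V baseTuple ≠ 0 :=
    chirotope_ne_zero_of_triangular hVW ![26, 20, 34, 18, 3, 0] (by decide) (by decide)
  have eq_base {r : Fin 6 → Fin 14}
      (h : ReflTransGen (FacetExchange facet1963) baseTuple r) :
      chirotope V r = chirotope V baseTuple :=
    (chirotope_eq_of_reflTransGen_facetExchange h hVW).symm
  have pluecker := chirotope_grassmann_pluecker V ![0, 2, 3, 11] 1 4 5 7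
  rw [eq_base reflTransGen_baseTuple_5_7, eq_base reflTransGen_baseTuple_1_5,
    eq_base reflTransGen_baseTuple_7_4, eq_base reflTransGen_baseTuple_7_1,
    eq_base reflTransGen_baseTuple_5_4, eq_base (r := ![1, 4, 0, 2, 3, 11]) .refl] at pluecker
  generalize chirotope V baseTuple = ε at base_ne_zero pluecker
  revert ε
  decide

end Prismatoid1963

theorem stmt9_general {K : Type*} [Field K] [LinearOrder K] [IsStrictOrderedRing K] :
    ¬ ∃ S : Matrix (Fin 14) (Fin 94) K, S.rank = 6 ∧
      ∀ (i : Fin 14) (j : Fin 94),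
        (i ∈ facet1963 j → S i j = 0) ∧ (i ∉ facet1963 j → 0 < S i j) := by
  rintro ⟨S, hrank, hS⟩
  obtain ⟨V, W, rfl⟩ := exists_rank_factorization hrank
  exact not_isSlackPattern_facet1963_mul V W hS

/-- The prismatoid #1963 of Criado and Santos is not realizable: there is no real `14 × 94`
matrix of rank `6` whose `(i,j)` entry vanishes exactly when vertex `i` lies on facet `j` and
is strictly positive otherwise, i.e. it has no slack matrix of a 5-polytope. -/
theorem stmt9 :
    ¬ ∃ S : Matrix (Fin 14) (Fin 94) ℝ, S.rank = 6 ∧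
      ∀ (i : Fin 14) (j : Fin 94),
        (i ∈ facet1963 j → S i j = 0) ∧ (i ∉ facet1963 j → 0 < S i j) :=
  stmt9_general
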